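/- For the sum-of-divisors function σ, ∑_{n ≤ x} σ(⌊x/n⌋)/⌊x/n⌋ = x · ∑_{m ≥ 1} σ(m)/(m²(m+1)) + O(x^{1/3} log x) as x → ∞. -/

import Mathlib

/-!
Since `⌊x / n⌋ = m` for exactly `⌊x / m⌋ - ⌊x / (m + 1)⌋` integers `n`, the terms with
`⌊x / n⌋ ≤ K` contribute `∑_{m ≤ K} (σ(m) / m) (⌊x / m⌋ - ⌊x / (m + 1)⌋)`. With `K ≈ x^{2/3}` the
remaining `O(x^{1/3})` values of `n` and the tail of the series are negligible, because
`σ(m) / m ≤ 1 + log m`. Replacing each floor by the sawtooth `ψ(t) = {t} - 1/2` leaves the sums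
`∑_{m ≤ K} (σ(m) / m) ψ(x / (m + b))` for `b = 0, 1`, which by `σ(m) / m = ∑_{d ∣ m} 1 / d` reduce
to sums of `ψ(Y / (n + a))` with `Y = x / d` and `a = b / d ∈ [0, 1]`. On a dyadic block such a sum
is `O(Y^{1/3} + M² / Y)`: the second derivative test, which is the Kusmin–Landau inequality applied
where the phase increments stay away from the integers, bounds the exponential sums
`∑ e(h Y / (n + a))`, and the Fourier series of the periodised parabola `B₂` transfers these
bounds to `ψ`, which lies between difference quotients of `B₂`. Summing over the blocks costs a
factor `log x`, while the sum over `d` converges like `∑ d^{-4/3}`.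
-/

open Filter Finset
open scoped Real FourierTransform fwdDiff ArithmeticFunction.sigma

/-! ### The Kusmin–Landau inequality and the second derivative test -/

theorem fourierChar_sub_intCast (t : ℝ) (m : ℤ) : 𝐞 (t - m) = 𝐞 t := by
  rw [AddChar.map_sub_eq_div, Real.fourierChar_apply' m, mul_comm, Circle.exp_int_mul_two_pi,
    div_one]

theorem one_sub_fourierChar_mul {t : ℝ} (ht : Real.sin (π * t) ≠ 0) :
    (1 - (𝐞 t : ℂ)) * (1 / 2 + (Real.cot (π * t) : ℂ) / 2 * Complex.I) = 1 := by
  have hne : 1 - (𝐞 t : ℂ) ≠ 0 := by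
    intro h
    obtain ⟨n, hn⟩ := Complex.exp_eq_one_iff.1 (sub_eq_zero.1 h).symm
    have hn' : ((2 * π * t : ℝ) : ℂ) = (n * (2 * π) : ℝ) := by
      apply mul_right_cancel₀ Complex.I_ne_zero
      push_cast at hn ⊢
      linear_combination hn
    apply ht
    rw [show π * t = n * π by linarith [Complex.ofReal_injective hn'],
      Real.sin_int_mul_pi]
  have hcot : (Real.cot (π * t) : ℂ) = (𝐞 t + 1) / (Complex.I * (1 - 𝐞 t)) := by
    have he : (𝐞 t : ℂ) = Complex.exp (2 * π * Complex.I * t) := by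
      rw [Real.fourierChar_apply]
      push_cast
      ring_nf
    rw [he, ← Complex.cot_pi_eq_exp_ratio]
    push_cast
    rfl
  rw [hcot]
  field_simp
  ring

theorem two_mul_le_sin_pi_mul {δ t : ℝ} (hδ : 0 ≤ δ) (ht : t ∈ Set.Icc δ (1 - δ)) :
    2 * δ ≤ Real.sin (π * t) := by
  have jordan {s : ℝ} (h0 : 0 ≤ s) (h1 : s ≤ 1 / 2) : 2 * s ≤ Real.sin (π * s) := by
    have := Real.mul_le_sin (x := π * s) (by positivity) (by nlinarith [Real.pi_pos])
    rwa [← mul_assoc, div_mul_cancel₀ _ Real.pi_ne_zero] at this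
  rcases le_total t (1 / 2) with h | h
  · linarith [jordan (hδ.trans ht.1) h, ht.1]
  · have := jordan (s := 1 - t) (by linarith [ht.2]) (by linarith)
    rw [mul_one_sub π, Real.sin_pi_sub] at this
    linarith [ht.2]

theorem abs_cot_pi_mul_le {δ t : ℝ} (hδ : 0 < δ) (ht : t ∈ Set.Icc δ (1 - δ)) :
    |Real.cot (π * t)| ≤ 1 / (2 * δ) := by
  have hsin := two_mul_le_sin_pi_mul hδ.le ht
  rw [Real.cot_eq_cos_div_sin, abs_div, abs_of_pos (by linarith : 0 < Real.sin (π * t))]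
  gcongr
  exact Real.abs_cos_le_one _

theorem antitoneOn_cot : AntitoneOn Real.cot (Set.Ioo 0 π) := by
  intro x hx y hy hxy
  rw [Real.cot_eq_cos_div_sin, Real.cot_eq_cos_div_sin,
    div_le_div_iff₀ (Real.sin_pos_of_mem_Ioo hy) (Real.sin_pos_of_mem_Ioo hx)]
  have : 0 ≤ Real.sin (y - x) :=
    Real.sin_nonneg_of_nonneg_of_le_pi (by linarith) (by linarith [hx.1, hy.2])
  rw [Real.sin_sub] at this
  linarith

theorem sum_range_sub_mul_eq {R : Type*} [Ring R] (z w : ℕ → R) (L : ℕ) :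
    ∑ n ∈ range (L + 1), (z n - z (n + 1)) * w n =
      z 0 * w 0 - z (L + 1) * w L + ∑ n ∈ range L, z (n + 1) * (w (n + 1) - w n) := by
  induction L with
  | zero => simp [sub_mul]
  | succ L ih =>
    rw [sum_range_succ, ih, sum_range_succ]
    noncomm_ring

theorem norm_sum_range_sub_mul_le {R : Type*} [NormedRing R] {z : ℕ → R} (hz : ∀ n, ‖z n‖ ≤ 1)
    (w : ℕ → R) (L : ℕ) :
    ‖∑ n ∈ range (L + 1), (z n - z (n + 1)) * w n‖ ≤
      ‖w 0‖ + ‖w L‖ + ∑ n ∈ range L, ‖w (n + 1) - w n‖ := by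
  have hmul (n : ℕ) (a : R) : ‖z n * a‖ ≤ ‖a‖ :=
    (norm_mul_le _ _).trans (mul_le_of_le_one_left (norm_nonneg a) (hz n))
  rw [sum_range_sub_mul_eq]
  exact (norm_add_le _ _).trans (add_le_add
    ((norm_sub_le _ _).trans (add_le_add (hmul _ _) (hmul _ _)))
    (norm_sum_le_of_le _ fun n _ ↦ hmul _ _))

theorem norm_sum_range_sub_mul_le_of_antitoneOn {z : ℕ → ℂ} (hz : ∀ n, ‖z n‖ ≤ 1) {c : ℕ → ℝ}
    {M : ℝ} {L : ℕ} (hc : AntitoneOn c (Set.Iic L)) (hM : ∀ n ≤ L, |c n| ≤ M) :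
    ‖∑ n ∈ range (L + 1), (z n - z (n + 1)) * (1 / 2 + (c n : ℂ) / 2 * Complex.I)‖ ≤
      1 + 2 * M := by
  set w : ℕ → ℂ := fun n ↦ 1 / 2 + (c n : ℂ) / 2 * Complex.I with hw_def
  have hw (n : ℕ) (hn : n ≤ L) : ‖w n‖ ≤ 1 / 2 + M / 2 := by
    refine (norm_add_le _ _).trans (add_le_add (by simp) ?_)
    simpa using div_le_div_of_nonneg_right (hM n hn) zero_le_two
  have hdw (n : ℕ) (hn : n < L) : ‖w (n + 1) - w n‖ = (c n - c (n + 1)) / 2 := by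
    have hanti : c (n + 1) ≤ c n := hc hn.le hn n.le_succ
    have hw_sub : w (n + 1) - w n = ((c (n + 1) - c n) / 2 : ℝ) * Complex.I := by
      simp only [hw_def]
      push_cast
      ring
    rw [hw_sub, norm_mul, Complex.norm_I, mul_one, Complex.norm_real,
      Real.norm_of_nonpos (by linarith)]
    ring
  calc ‖∑ n ∈ range (L + 1), (z n - z (n + 1)) * w n‖
      ≤ ‖w 0‖ + ‖w L‖ + ∑ n ∈ range L, ‖w (n + 1) - w n‖ := norm_sum_range_sub_mul_le hz w L
    _ = ‖w 0‖ + ‖w L‖ + (c 0 - c L) / 2 := by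
        rw [sum_congr rfl fun n hn ↦ hdw n (mem_range.1 hn), ← sum_div, sum_range_sub']
    _ ≤ 1 + 2 * M := by
        linarith [hw 0 L.zero_le, hw L le_rfl, (abs_le.1 (hM 0 L.zero_le)).2,
          (abs_le.1 (hM L le_rfl)).1]

-- Kusmin–Landau: `𝐞 (g n)` is its own difference times `(1 + i cot (π Δg n)) / 2`, a factor of
-- bounded variation because the cotangent is monotone.
theorem norm_sum_fourierChar_le_of_monotoneOn_fwdDiff {g : ℕ → ℝ} {δ : ℝ} {m : ℤ} {p q : ℕ}
    (hδ : 0 < δ) (hmono : MonotoneOn (Δ_[1] g) (Set.Ico p q))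
    (hmem : ∀ n ∈ Ico p q, Δ_[1] g n ∈ Set.Icc (m + δ) (m + 1 - δ)) :
    ‖∑ n ∈ Ico p q, (𝐞 (g n) : ℂ)‖ ≤ 2 / δ := by
  rcases le_or_gt q p with hqp | hpq
  · rw [Ico_eq_empty_of_le hqp, sum_empty, norm_zero]
    positivity
  obtain ⟨L, rfl⟩ : ∃ L, q = p + (L + 1) := ⟨q - p - 1, by lia⟩
  set t : ℕ → ℝ := fun n ↦ Δ_[1] g (p + n) - m
  have ht (n : ℕ) (hn : n ≤ L) : t n ∈ Set.Icc δ (1 - δ) := by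
    obtain ⟨h₁, h₂⟩ := hmem (p + n) (by simp; lia)
    exact ⟨by linarith, by linarith⟩
  have hcot : AntitoneOn (fun n ↦ Real.cot (π * t n)) (Set.Iic L) := by
    have hIoo (n : ℕ) (hn : n ≤ L) : π * t n ∈ Set.Ioo 0 π :=
      ⟨mul_pos Real.pi_pos (by linarith [(ht n hn).1]),
        mul_lt_of_lt_one_right Real.pi_pos (by linarith [(ht n hn).2])⟩
    intro i hi j hj hij
    rw [Set.mem_Iic] at hi hj
    refine antitoneOn_cot (hIoo i hi) (hIoo j hj)
      (mul_le_mul_of_nonneg_left (sub_le_sub_right ?_ _) Real.pi_pos.le)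
    exact hmono (by simp; lia) (by simp; lia) (by lia)
  have hself (n : ℕ) (hn : n ≤ L) : (𝐞 (g (p + n)) : ℂ) =
      (𝐞 (g (p + n)) - 𝐞 (g (p + (n + 1)))) *
        (1 / 2 + (Real.cot (π * t n) : ℂ) / 2 * Complex.I) := by
    have hsin : 0 < Real.sin (π * t n) := by
      linarith [two_mul_le_sin_pi_mul hδ.le (ht n hn)]
    have hstep : 𝐞 (g (p + (n + 1))) = 𝐞 (g (p + n)) * 𝐞 (t n) := by
      rw [fourierChar_sub_intCast, ← AddChar.map_add_eq_mul]
      exact congrArg 𝐞 (add_sub_cancel _ _).symm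
    rw [hstep, Circle.coe_mul]
    linear_combination -(𝐞 (g (p + n)) : ℂ) * one_sub_fourierChar_mul hsin.ne'
  rw [sum_Ico_eq_sum_range, add_tsub_cancel_left,
    sum_congr rfl fun n hn ↦ hself n (mem_range_succ_iff.1 hn)]
  refine (norm_sum_range_sub_mul_le_of_antitoneOn (z := fun n ↦ (𝐞 (g (p + n)) : ℂ))
    (fun n ↦ (Circle.norm_coe _).le) hcot fun n hn ↦ abs_cot_pi_mul_le hδ (ht n hn)).trans ?_
  rw [show 1 + 2 * (1 / (2 * δ)) = (δ + 1) / δ by field_simp]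
  gcongr
  linarith [(ht 0 L.zero_le).1, (ht 0 L.zero_le).2]

theorem exists_eq_Ico_of_ordConnected {S : Finset ℕ} (hS : (S : Set ℕ).OrdConnected) :
    ∃ p q, S = Ico p q := by
  rcases S.eq_empty_or_nonempty with rfl | hne
  · exact ⟨0, 0, by simp⟩
  refine ⟨S.min' hne, S.max' hne + 1, Subset.antisymm (fun k hk ↦ ?_) fun k hk ↦ ?_⟩
  · exact mem_Ico.2 ⟨S.min'_le k hk, Nat.lt_succ_of_le (S.le_max' k hk)⟩
  · obtain ⟨h₁, h₂⟩ := mem_Ico.1 hk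
    exact hS.out (S.min'_mem hne) (S.max'_mem hne) ⟨h₁, Nat.le_of_lt_succ h₂⟩

theorem card_le_of_monotoneOn_sub_mul {S : Finset ℕ} {D : ℕ → ℝ} {lam u v : ℝ} (hlam : 0 < lam)
    (huv : u ≤ v) (hD : MonotoneOn (fun n ↦ D n - lam * n) S)
    (hmem : ∀ n ∈ S, D n ∈ Set.Icc u v) : (#S : ℝ) ≤ (v - u) / lam + 1 := by
  rcases S.eq_empty_or_nonempty with rfl | hne
  · have := div_nonneg (sub_nonneg.2 huv) hlam.le
    simp only [card_empty, Nat.cast_zero]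
    linarith
  have hmin_le : S.min' hne ≤ S.max' hne := S.min'_le _ (S.max'_mem hne)
  have hcard : #S ≤ S.max' hne + 1 - S.min' hne := by
    rw [← Nat.card_Icc]
    exact card_le_card fun k hk ↦ mem_Icc.2 ⟨S.min'_le k hk, S.le_max' k hk⟩
  have hcard' : (#S : ℝ) + S.min' hne ≤ S.max' hne + 1 := by
    exact_mod_cast (by lia : #S + S.min' hne ≤ S.max' hne + 1)
  have hspread : (S.max' hne : ℝ) - S.min' hne ≤ (v - u) / lam := by
    have h₁ := hD (S.min'_mem hne) (S.max'_mem hne) hmin_le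
    have h₂ := hmem _ (S.min'_mem hne)
    have h₃ := hmem _ (S.max'_mem hne)
    rw [le_div_iff₀ hlam]
    linarith [h₂.1, h₃.2]
  linarith

theorem norm_sum_fourierChar_le_card {ι : Type*} (s : Finset ι) (f : ι → ℝ) :
    ‖∑ i ∈ s, (𝐞 (f i) : ℂ)‖ ≤ #s := by
  simpa using norm_sum_le_of_le s fun i _ ↦ (Circle.norm_coe (𝐞 (f i))).le

section VanDerCorput

variable {g : ℕ → ℝ} {lam δ u v : ℝ} {p q : ℕ}

theorem monotoneOn_of_monotoneOn_sub_mul {D : ℕ → ℝ} {s : Set ℕ} (hlam : 0 ≤ lam)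
    (hD : MonotoneOn (fun n ↦ D n - lam * n) s) : MonotoneOn D s := by
  intro i hi j hj hij
  have := hD hi hj hij
  have : lam * (i : ℝ) ≤ lam * j := by gcongr
  dsimp only at *
  linarith

theorem norm_sum_fourierChar_filter_le (hδ : 0 < δ)
    (hmono : MonotoneOn (Δ_[1] g) (Set.Ico p q)) (m : ℤ) :
    ‖∑ n ∈ Ico p q with Δ_[1] g n ∈ Set.Icc (m + δ) (m + 1 - δ), (𝐞 (g n) : ℂ)‖ ≤ 2 / δ := by
  obtain ⟨T, hT, heq⟩ :=
    (Set.ordConnected_Icc (a := (m + δ : ℝ)) (b := m + 1 - δ)).preimage_monotoneOn hmono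
  obtain ⟨p', q', hI⟩ := exists_eq_Ico_of_ordConnected
    (S := {n ∈ Ico p q | Δ_[1] g n ∈ Set.Icc (m + δ) (m + 1 - δ)}) <| by
      simp only [coe_filter, mem_Ico]
      exact (congrArg Set.OrdConnected heq).mpr (Set.ordConnected_Ico.inter hT)
  have hmem (n : ℕ) (hn : n ∈ Ico p' q') :
      n ∈ Set.Ico p q ∧ Δ_[1] g n ∈ Set.Icc (m + δ) (m + 1 - δ) := by
    rwa [← hI, mem_filter, ← mem_coe, coe_Ico] at hn
  rw [hI]
  exact norm_sum_fourierChar_le_of_monotoneOn_fwdDiff hδ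
    (hmono.mono fun n hn ↦ (hmem n (mem_Ico.2 hn)).1) fun n hn ↦ (hmem n hn).2

-- Grouping by `⌊Δg - δ⌋` puts the frequencies within `δ` of an integer at the end of their group.
theorem norm_sum_fourierChar_fiber_le (hlam : 0 < lam) (hδ : 0 < δ)
    (hg : MonotoneOn (fun n ↦ Δ_[1] g n - lam * n) (Set.Ico p q)) (m : ℤ) :
    ‖∑ n ∈ Ico p q with ⌊Δ_[1] g n - δ⌋ = m, (𝐞 (g n) : ℂ)‖ ≤ 2 / δ + (2 * δ / lam + 1) := by
  have hfiber (n : ℕ) :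
      ⌊Δ_[1] g n - δ⌋ = m ↔ m + δ ≤ Δ_[1] g n ∧ Δ_[1] g n < m + 1 + δ := by
    rw [Int.floor_eq_iff, le_sub_iff_add_le, sub_lt_iff_lt_add]
  have hgood : ‖∑ n ∈ Ico p q with ⌊Δ_[1] g n - δ⌋ = m ∧ Δ_[1] g n ≤ m + 1 - δ, (𝐞 (g n) : ℂ)‖ ≤
      2 / δ := by
    convert norm_sum_fourierChar_filter_le hδ (monotoneOn_of_monotoneOn_sub_mul hlam.le hg) m
      using 4 with n
    rw [hfiber]
    exact ⟨fun h ↦ ⟨h.1.1, h.2⟩, fun h ↦ ⟨⟨h.1, by linarith [h.2]⟩, h.2⟩⟩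
  have hbad : ‖∑ n ∈ Ico p q with ⌊Δ_[1] g n - δ⌋ = m ∧ ¬ Δ_[1] g n ≤ m + 1 - δ, (𝐞 (g n) : ℂ)‖ ≤
      2 * δ / lam + 1 := by
    refine (norm_sum_fourierChar_le_card _ _).trans ?_
    rw [show 2 * δ = (m + 1 + δ) - (m + 1 - δ) by ring]
    refine card_le_of_monotoneOn_sub_mul hlam (by linarith) (hg.mono fun n hn ↦ ?_) fun n hn ↦ ?_
    · exact mem_Ico.1 (mem_filter.1 hn).1
    · rw [mem_filter, hfiber, not_le] at hn
      exact ⟨hn.2.2.le, hn.2.1.2.le⟩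
  rw [← sum_filter_add_sum_filter_not _ fun n ↦ Δ_[1] g n ≤ m + 1 - δ, filter_filter,
    filter_filter]
  exact (norm_add_le _ _).trans (add_le_add hgood hbad)

-- With `δ = √lam` the two error terms of each group balance; for `lam ≥ 1` counting suffices.
theorem norm_sum_fourierChar_le_of_monotoneOn_sub_mul (hlam : 0 < lam) (huv : u ≤ v)
    (hg : MonotoneOn (fun n ↦ Δ_[1] g n - lam * n) (Set.Ico p q))
    (hmem : ∀ n ∈ Ico p q, Δ_[1] g n ∈ Set.Icc u v) :
    ‖∑ n ∈ Ico p q, (𝐞 (g n) : ℂ)‖ ≤ 5 * (v - u + 2) / √lam + 1 := by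
  have hsqrt : 0 < √lam := Real.sqrt_pos.2 hlam
  have hsq : √lam * √lam = lam := Real.mul_self_sqrt hlam.le
  rcases le_total 1 √lam with hone | hone
  · have hcard := card_le_of_monotoneOn_sub_mul hlam huv (by rwa [coe_Ico]) hmem
    refine (norm_sum_fourierChar_le_card _ _).trans (hcard.trans (add_le_add_left ?_ 1))
    exact div_le_div₀ (by linarith) (by linarith) hsqrt (by nlinarith)
  have hmaps : ∀ n ∈ Ico p q, ⌊Δ_[1] g n - √lam⌋ ∈ Icc ⌊u - √lam⌋ ⌊v - √lam⌋ := fun n hn ↦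
    mem_Icc.2 ⟨Int.floor_le_floor (sub_le_sub_right (hmem n hn).1 _),
      Int.floor_le_floor (sub_le_sub_right (hmem n hn).2 _)⟩
  have hcard : (#(Icc ⌊u - √lam⌋ ⌊v - √lam⌋) : ℝ) ≤ v - u + 2 := by
    have hle : ⌊u - √lam⌋ ≤ ⌊v - √lam⌋ := Int.floor_le_floor (sub_le_sub_right huv _)
    rw [← Int.cast_natCast (R := ℝ), Int.card_Icc_of_le _ _ (by lia)]
    push_cast
    linarith [Int.floor_le (v - √lam), Int.lt_floor_add_one (u - √lam)]
  have hfiber : 2 / √lam + (2 * √lam / lam + 1) ≤ 5 / √lam := by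
    have hone' : 1 ≤ 1 / √lam := (one_le_div hsqrt).2 hone
    have hdiv : 2 * √lam / lam = 2 / √lam := by
      rw [mul_div_assoc, Real.sqrt_div_self, ← div_eq_mul_inv]
    rw [hdiv]
    linarith [show 5 / √lam = 2 / √lam + 2 / √lam + 1 / √lam by ring]
  calc ‖∑ n ∈ Ico p q, (𝐞 (g n) : ℂ)‖
      ≤ ∑ m ∈ Icc ⌊u - √lam⌋ ⌊v - √lam⌋, (2 / √lam + (2 * √lam / lam + 1)) := by
        rw [← sum_fiberwise_of_maps_to hmaps]
        exact norm_sum_le_of_le _ fun m _ ↦ norm_sum_fourierChar_fiber_le hlam hsqrt hg m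
    _ ≤ (v - u + 2) * (5 / √lam) := by
        rw [sum_const, nsmul_eq_mul]
        gcongr
    _ = 5 * (v - u + 2) / √lam := by ring
    _ ≤ 5 * (v - u + 2) / √lam + 1 := le_add_of_nonneg_right zero_le_one

end VanDerCorput

section Hyperbola

variable {Y a : ℝ} {p q : ℕ}

theorem fwdDiff_div_natCast_add {n : ℕ} (hn : 0 < n + a) :
    Δ_[1] (fun k : ℕ ↦ Y / (k + a)) n = -(Y / ((n + a) * (n + 1 + a))) := by
  have : (n : ℝ) + 1 + a ≠ 0 := by linarith
  simp only [fwdDiff, Nat.cast_add_one]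
  field_simp
  ring

theorem fwdDiff_div_natCast_add_mem_Icc (hY : 0 ≤ Y) (hp : 0 < p + a) (hq : q + a ≤ 2 * (p + a))
    {n : ℕ} (hn : n ∈ Ico p q) :
    Δ_[1] (fun k : ℕ ↦ Y / (k + a)) n ∈
      Set.Icc (-(Y / (p + a) ^ 2)) (-(Y / (4 * (p + a) ^ 2))) := by
  obtain ⟨hpn, hnq⟩ := mem_Ico.1 hn
  have hpn' : (p : ℝ) ≤ n := by exact_mod_cast hpn
  have hnq' : (n : ℝ) + 1 ≤ q := by exact_mod_cast hnq
  rw [fwdDiff_div_natCast_add (by linarith)]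
  refine ⟨neg_le_neg (div_le_div_of_nonneg_left hY (by positivity) ?_),
    neg_le_neg (div_le_div_of_nonneg_left hY (mul_pos ?_ ?_) ?_)⟩ <;> nlinarith

theorem monotoneOn_fwdDiff_div_natCast_add (hY : 0 ≤ Y) (hp : 0 < p + a)
    (hq : q + a ≤ 2 * (p + a)) :
    MonotoneOn (fun n ↦ Δ_[1] (fun k : ℕ ↦ Y / (k + a)) n - Y / (4 * (p + a) ^ 3) * n)
      (Set.Ico p q) := by
  refine monotoneOn_of_le_add_one Set.ordConnected_Ico fun n _ hn hn' ↦ ?_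
  have hpn : (p : ℝ) ≤ n := by exact_mod_cast hn.1
  have hnq : (n : ℝ) + 1 + 1 ≤ q := by exact_mod_cast Nat.succ_le_of_lt hn'.2
  have h₀ : 0 < n + a := by linarith
  have h₁ : 0 < n + 1 + a := by linarith
  have h₂ : 0 < n + 1 + 1 + a := by linarith
  have hsecond : Y / ((n + a) * (n + 1 + a)) - Y / ((n + 1 + a) * (n + 1 + 1 + a)) =
      2 * Y / ((n + a) * (n + 1 + a) * (n + 1 + 1 + a)) := by
    field_simp
    ring
  have hlower : Y / (4 * (p + a) ^ 3) ≤
      2 * Y / ((n + a) * (n + 1 + a) * (n + 1 + 1 + a)) :=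
    calc Y / (4 * (p + a) ^ 3) = 2 * Y / (2 * (p + a)) ^ 3 := by field_simp; ring
      _ ≤ 2 * Y / ((n + a) * (n + 1 + a) * (n + 1 + 1 + a)) := by
        rw [pow_three']
        gcongr <;> linarith
  rw [fwdDiff_div_natCast_add (n := n + 1) (by push_cast; exact h₁), fwdDiff_div_natCast_add h₀]
  push_cast
  linarith

theorem norm_sum_fourierChar_div_le_of_le (hY : 0 < Y) (hp : 0 < p + a)
    (hq : q + a ≤ 2 * (p + a)) (hsmall : Y / (p + a) ^ 2 ≤ 4 / 5) :
    ‖∑ n ∈ Ico p q, (𝐞 (Y / (n + a)) : ℂ)‖ ≤ 8 * (p + a) ^ 2 / Y := by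
  have hmem (n : ℕ) (hn : n ∈ Ico p q) := fwdDiff_div_natCast_add_mem_Icc hY.le hp hq hn
  have hquarter : Y / (4 * (p + a) ^ 2) = Y / (p + a) ^ 2 / 4 := by field_simp
  calc ‖∑ n ∈ Ico p q, (𝐞 (Y / (n + a)) : ℂ)‖ ≤ 2 / (Y / (4 * (p + a) ^ 2)) := by
        refine norm_sum_fourierChar_le_of_monotoneOn_fwdDiff (m := -1) (by positivity)
          (monotoneOn_of_monotoneOn_sub_mul (by positivity)
            (monotoneOn_fwdDiff_div_natCast_add hY.le hp hq))
          fun n hn ↦ ⟨le_trans ?_ (hmem n hn).1, (hmem n hn).2.trans ?_⟩ <;>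
        push_cast <;> linarith
    _ = 8 * (p + a) ^ 2 / Y := by field_simp; ring

theorem norm_sum_fourierChar_div_le_of_lt (hp : 1 ≤ p + a)
    (hq : q + a ≤ 2 * (p + a)) (hlarge : 4 / 5 < Y / (p + a) ^ 2) :
    ‖∑ n ∈ Ico p q, (𝐞 (Y / (n + a)) : ℂ)‖ ≤ 34 * √(Y / (p + a)) := by
  have hX : 0 < p + a := by linarith
  have hY : 0 < Y :=
    (by positivity : 0 ≤ 4 / 5 * (p + a) ^ 2).trans_lt ((lt_div_iff₀ (by positivity)).1 hlarge)
  have hmono := monotoneOn_fwdDiff_div_natCast_add hY.le hX hq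
  have hmem (n : ℕ) (hn : n ∈ Ico p q) := fwdDiff_div_natCast_add_mem_Icc hY.le hX hq hn
  set X : ℝ := p + a
  have hYX : 4 / 5 * X ≤ Y / X := by
    have := hlarge.le
    rw [le_div_iff₀ (by positivity)] at this ⊢
    linarith
  have hsqrt_lam : √(Y / (4 * X ^ 3)) = √(Y / X) / (2 * X) := by
    rw [show Y / (4 * X ^ 3) = Y / X / (2 * X) ^ 2 by field_simp; ring,
      Real.sqrt_div (by positivity), Real.sqrt_sq (by positivity)]
  have hone : 1 ≤ 3 / 2 * √(Y / X) := by
    have := Real.le_sqrt_of_sq_le (x := 2 / 3) (y := Y / X) (by linarith)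
    linarith
  have hlength : -(Y / (4 * X ^ 2)) - -(Y / X ^ 2) + 2 ≤ 13 / 4 * (Y / X ^ 2) := by
    linarith [show Y / (4 * X ^ 2) = Y / X ^ 2 / 4 by field_simp]
  calc ‖∑ n ∈ Ico p q, (𝐞 (Y / (n + a)) : ℂ)‖
      ≤ 5 * (-(Y / (4 * X ^ 2)) - -(Y / X ^ 2) + 2) / √(Y / (4 * X ^ 3)) + 1 :=
        norm_sum_fourierChar_le_of_monotoneOn_sub_mul (by positivity)
          (neg_le_neg (by gcongr; linarith [sq_nonneg X])) hmono hmem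
    _ ≤ 5 * (13 / 4 * (Y / X ^ 2)) / (√(Y / X) / (2 * X)) + 3 / 2 * √(Y / X) := by
        rw [hsqrt_lam]
        gcongr
    _ = 65 / 2 * (Y / X / √(Y / X)) + 3 / 2 * √(Y / X) := by field_simp; ring
    _ = 34 * √(Y / X) := by rw [Real.div_sqrt]; ring

theorem norm_sum_fourierChar_div_le (hY : 0 < Y) (hp : 1 ≤ p + a) (hq : q + a ≤ 2 * (p + a)) :
    ‖∑ n ∈ Ico p q, (𝐞 (Y / (n + a)) : ℂ)‖ ≤ 34 * √(Y / (p + a)) + 8 * (p + a) ^ 2 / Y := by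
  rcases le_or_gt (Y / (p + a) ^ 2) (4 / 5) with hsmall | hlarge
  · exact (norm_sum_fourierChar_div_le_of_le hY (by linarith) hq hsmall).trans
      (le_add_of_nonneg_left (by positivity))
  · exact (norm_sum_fourierChar_div_le_of_lt hp hq hlarge).trans
      (le_add_of_nonneg_right (by positivity))

end Hyperbola

/-! ### Sums of the sawtooth function -/

theorem sum_range_le_of_le_sub {a b : ℕ → ℝ} (hb : ∀ n, 0 ≤ b n)
    (h : ∀ n, a n ≤ b n - b (n + 1)) (N : ℕ) : ∑ n ∈ range N, a n ≤ b 0 :=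
  calc ∑ n ∈ range N, a n ≤ ∑ n ∈ range N, (b n - b (n + 1)) := sum_le_sum fun n _ ↦ h n
    _ = b 0 - b N := sum_range_sub' b N
    _ ≤ b 0 := sub_le_self _ (hb N)

theorem min_one_sq_div_cube_le {x : ℝ} (hx : 0 < x) :
    min 1 (x ^ 2) / x ^ 3 ≤ 4 / (x * (1 + x) ^ 2) := by
  have hmin : min 1 (x ^ 2) * (1 + x) ^ 2 ≤ 4 * x ^ 2 := by
    rcases le_total x 1 with h | h
    · calc min 1 (x ^ 2) * (1 + x) ^ 2 ≤ x ^ 2 * (1 + 1) ^ 2 := by gcongr; exact min_le_right _ _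
        _ = 4 * x ^ 2 := by ring
    · calc min 1 (x ^ 2) * (1 + x) ^ 2 ≤ 1 * (x + x) ^ 2 := by gcongr; exact min_le_left _ _
        _ = 4 * x ^ 2 := by ring
  rw [div_le_div_iff₀ (by positivity) (by positivity)]
  linarith [mul_le_mul_of_nonneg_left hmin hx.le]

theorem div_mul_sq_le_inv_sub_inv {x y d : ℝ} (hx : 0 < x) (hy : 0 ≤ y) (hyx : y ≤ x)
    (hd : x ^ 2 - y ^ 2 = d) : d / (2 * (x * (1 + x) ^ 2)) ≤ 1 / (1 + y) - 1 / (1 + x) := by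
  have hsub : 1 / (1 + y) - 1 / (1 + x) = d / ((x + y) * ((1 + y) * (1 + x))) := by
    rw [← hd]
    field_simp
    ring
  rw [hsub]
  refine div_le_div_of_nonneg_left (by nlinarith) (by positivity) ?_
  calc (x + y) * ((1 + y) * (1 + x)) ≤ (x + x) * ((1 + x) * (1 + x)) := by gcongr
    _ = 2 * (x * (1 + x) ^ 2) := by ring

-- The potential `8 √δ / (1 + √(h δ))` drops by at least the `h`-th term at each step.
theorem min_mul_div_sq_mul_sqrt_le_sub {δ : ℝ} (hδ : 0 < δ) (h : ℕ) :
    min 1 (h * δ) / h ^ 2 * √h ≤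
      8 * √δ / (1 + √((h - 1 : ℕ) * δ)) - 8 * √δ / (1 + √((h + 1 - 1 : ℕ) * δ)) := by
  rcases h with _ | h
  · simp
  simp only [Nat.add_sub_cancel]
  set H : ℝ := ((h + 1 : ℕ) : ℝ) with hH
  have hH0 : 0 < H := by positivity
  set x : ℝ := √(H * δ)
  have hx : 0 < x := by positivity
  have hxsq : x ^ 2 = H * δ := Real.sq_sqrt (by positivity)
  have hx_mul : x = √H * √δ := Real.sqrt_mul hH0.le δ
  have hysq : √(h * δ) ^ 2 = h * δ := Real.sq_sqrt (by positivity)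
  have hyx : √(h * δ) ≤ x := Real.sqrt_le_sqrt (by gcongr; simp [hH])
  calc min 1 (H * δ) / H ^ 2 * √H = √δ * δ * (min 1 (x ^ 2) / x ^ 3) := by
        rw [hxsq, pow_succ x 2, hxsq, hx_mul]
        have := Real.sq_sqrt hH0.le
        field_simp
        linear_combination this
    _ ≤ √δ * δ * (4 / (x * (1 + x) ^ 2)) := by
        exact mul_le_mul_of_nonneg_left (min_one_sq_div_cube_le hx) (by positivity)
    _ = 8 * √δ * (δ / (2 * (x * (1 + x) ^ 2))) := by field_simp; norm_num
    _ ≤ 8 * √δ * (1 / (1 + √(h * δ)) - 1 / (1 + x)) := by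
        gcongr
        refine div_mul_sq_le_inv_sub_inv hx (Real.sqrt_nonneg _) hyx ?_
        rw [hxsq, hysq, hH]
        push_cast
        ring
    _ = 8 * √δ / (1 + √(h * δ)) - 8 * √δ / (1 + x) := by ring

theorem summable_min_mul_div_sq_mul_sqrt {δ : ℝ} (hδ : 0 < δ) :
    Summable fun h : ℕ ↦ min 1 (h * δ) / h ^ 2 * √h :=
  summable_of_sum_range_le (fun _ ↦ by positivity)
    (sum_range_le_of_le_sub (fun _ ↦ by positivity) (min_mul_div_sq_mul_sqrt_le_sub hδ))

theorem tsum_min_mul_div_sq_mul_sqrt_le {δ : ℝ} (hδ : 0 < δ) :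
    ∑' h : ℕ, min 1 (h * δ) / h ^ 2 * √h ≤ 8 * √δ := by
  simpa using Real.tsum_le_of_sum_range_le (fun _ ↦ by positivity)
    (sum_range_le_of_le_sub (fun _ ↦ by positivity) (min_mul_div_sq_mul_sqrt_le_sub hδ))

theorem tsum_min_mul_div_sq_mul_le {δ P Q : ℝ} (hδ : 0 < δ) (hP : 0 ≤ P) (hQ : 0 ≤ Q)
    {E : ℕ → ℝ} (hE₀ : ∀ h, 0 ≤ E h) (hE : ∀ h : ℕ, 0 < h → E h ≤ P * √h + Q / h) :
    ∑' h : ℕ, min 1 (h * δ) / h ^ 2 * E h ≤ 8 * P * √δ + π ^ 2 / 6 * (Q * δ) := by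
  have hzeta := hasSum_zeta_two.mul_left (Q * δ)
  have hsqrt := (summable_min_mul_div_sq_mul_sqrt hδ).hasSum.mul_left P
  have hterm (h : ℕ) : min 1 (h * δ) / h ^ 2 * E h ≤
      P * (min 1 (h * δ) / h ^ 2 * √h) + Q * δ * (1 / (h : ℝ) ^ 2) := by
    rcases h.eq_zero_or_pos with rfl | hh
    · simp
    calc min 1 (h * δ) / h ^ 2 * E h ≤ min 1 (h * δ) / h ^ 2 * (P * √h + Q / h) := by
          gcongr
          exact hE h hh
      _ = P * (min 1 (h * δ) / h ^ 2 * √h) + min 1 (h * δ) / h ^ 2 * (Q / h) := by ring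
      _ ≤ P * (min 1 (h * δ) / h ^ 2 * √h) + h * δ / h ^ 2 * (Q / h) := by
          gcongr
          exact min_le_right _ _
      _ = P * (min 1 (h * δ) / h ^ 2 * √h) + Q * δ * (1 / (h : ℝ) ^ 2) := by field_simp
  have hsum := hsqrt.add hzeta
  have hle := (Summable.of_nonneg_of_le (fun h ↦ mul_nonneg (by positivity) (hE₀ h)) hterm
    hsum.summable).tsum_le_tsum hterm hsum.summable
  rw [hsum.tsum_eq] at hle
  linarith [mul_le_mul_of_nonneg_left (tsum_min_mul_div_sq_mul_sqrt_le hδ) hP]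

/-- The sawtooth `ψ(t) = {t} - 1/2`, with value `-1/2` at the integers. -/
noncomputable def sawtooth (t : ℝ) : ℝ := Int.fract t - 1 / 2

-- Among the integer translates of a point, `y ^ 2 - y` is smallest at the one in `[0, 1)`.
theorem bernoulliFun_two_fract_add_le (t δ : ℝ) :
    bernoulliFun 2 (Int.fract (t + δ)) ≤
      bernoulliFun 2 (Int.fract t) + 2 * δ * sawtooth t + δ ^ 2 := by
  obtain ⟨k, hk⟩ : ∃ k : ℤ, Int.fract t + δ = Int.fract (t + δ) + k :=
    ⟨⌊t + δ⌋ - ⌊t⌋, by simp only [Int.fract]; push_cast; ring⟩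
  have h₀ := Int.fract_nonneg (t + δ)
  have h₁ := Int.fract_lt_one (t + δ)
  have hmin : 0 ≤ (k : ℝ) * (k - 1 + 2 * Int.fract (t + δ)) := by
    rcases lt_trichotomy k 0 with h | rfl | h
    · have : (k : ℝ) ≤ -1 := by exact_mod_cast Int.le_sub_one_of_lt h
      exact mul_nonneg_of_nonpos_of_nonpos (by linarith) (by linarith)
    · simp
    · have : (1 : ℝ) ≤ k := by exact_mod_cast h
      exact mul_nonneg (by linarith) (by linarith)
  rw [bernoulliFun_two, bernoulliFun_two, sawtooth]
  rw [← eq_sub_iff_add_eq] at hk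
  rw [hk]
  linarith

theorem hasSum_cos_two_pi_div_sq (t : ℝ) :
    HasSum (fun h : ℕ ↦ 1 / (h : ℝ) ^ 2 * Real.cos (2 * π * (h * t)))
      (π ^ 2 * bernoulliFun 2 (Int.fract t)) := by
  have hB : (Polynomial.map (algebraMap ℚ ℝ) (Polynomial.bernoulli (2 * 1))).eval (Int.fract t) =
      bernoulliFun 2 (Int.fract t) := rfl
  convert! hasSum_one_div_nat_pow_mul_cos one_ne_zero
    ⟨Int.fract_nonneg t, (Int.fract_lt_one t).le⟩ using 1
  · funext h
    rw [mul_one, ← Real.cos_sub_int_mul_two_pi _ (h * ⌊t⌋), Int.fract]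
    push_cast
    ring_nf
  · rw [hB, mul_one 2, Nat.factorial_two]
    push_cast
    ring

theorem norm_fourierChar_sub_one_le (t : ℝ) :
    ‖(𝐞 t : ℂ) - 1‖ ≤ 2 * π * min 1 |t| := by
  rw [mul_min_of_nonneg _ _ (by positivity), mul_one]
  refine le_min ?_ ?_
  · refine (norm_sub_le _ _).trans ?_
    rw [Circle.norm_coe, norm_one]
    linarith [Real.pi_gt_three]
  · rw [Real.fourierChar_apply, mul_comm]
    refine Real.norm_exp_I_mul_ofReal_sub_one_le.trans_eq ?_
    rw [Real.norm_eq_abs, abs_mul, abs_of_pos (by positivity)]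

section ErdosTuran

variable {ι : Type*} {s : Finset ι} {f : ι → ℝ} {δ P Q : ℝ}

theorem hasSum_re_fourierChar_sub_one_mul_sum (s : Finset ι) (f : ι → ℝ) (δ : ℝ) :
    HasSum (fun h : ℕ ↦ 1 / (h : ℝ) ^ 2 *
        (((𝐞 (h * δ) : ℂ) - 1) * ∑ i ∈ s, (𝐞 (h * f i) : ℂ)).re)
      (π ^ 2 * ∑ i ∈ s,
        (bernoulliFun 2 (Int.fract (f i + δ)) - bernoulliFun 2 (Int.fract (f i)))) := by
  have hterm (i : ι) := (hasSum_cos_two_pi_div_sq (f i + δ)).sub (hasSum_cos_two_pi_div_sq (f i))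
  convert! hasSum_sum fun i (_ : i ∈ s) ↦ hterm i using 1
  · funext h
    have hre (t : ℝ) : (𝐞 t : ℂ).re = Real.cos (2 * π * t) := Complex.exp_ofReal_mul_I_re _
    rw [mul_sum, Complex.re_sum, mul_sum]
    refine sum_congr rfl fun i _ ↦ ?_
    rw [sub_one_mul, ← Circle.coe_mul, ← AddChar.map_add_eq_mul, Complex.sub_re, hre, hre,
      mul_sub, ← mul_add, add_comm δ]
  · rw [mul_sum]
    simp only [mul_sub]

theorem abs_sum_bernoulliFun_two_sub_le (s : Finset ι) (f : ι → ℝ) (δ : ℝ) :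
    |∑ i ∈ s, (bernoulliFun 2 (Int.fract (f i + δ)) - bernoulliFun 2 (Int.fract (f i)))| ≤
      2 / π * ∑' h : ℕ, min 1 (h * |δ|) / h ^ 2 * ‖∑ i ∈ s, (𝐞 (h * f i) : ℂ)‖ := by
  have hsummable : Summable fun h : ℕ ↦
      min 1 (h * |δ|) / h ^ 2 * ‖∑ i ∈ s, (𝐞 (h * f i) : ℂ)‖ := by
    refine .of_nonneg_of_le (fun h ↦ by positivity) (fun h ↦ ?_)
      ((Real.summable_one_div_nat_pow.2 one_lt_two).mul_right (#s : ℝ))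
    gcongr
    · exact min_le_left _ _
    · exact norm_sum_fourierChar_le_card s _
  have hterm (h : ℕ) : ‖1 / (h : ℝ) ^ 2 *
      (((𝐞 (h * δ) : ℂ) - 1) * ∑ i ∈ s, (𝐞 (h * f i) : ℂ)).re‖ ≤
      2 * π * (min 1 (h * |δ|) / h ^ 2 * ‖∑ i ∈ s, (𝐞 (h * f i) : ℂ)‖) := by
    have hre := (Complex.abs_re_le_norm _).trans_eq
      (norm_mul ((𝐞 (h * δ) : ℂ) - 1) (∑ i ∈ s, (𝐞 (h * f i) : ℂ)))
    have hchar := norm_fourierChar_sub_one_le (h * δ)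
    rw [abs_mul, Nat.abs_cast] at hchar
    rw [norm_mul, Real.norm_of_nonneg (by positivity), Real.norm_eq_abs]
    calc _ ≤ 1 / (h : ℝ) ^ 2 *
          (2 * π * min 1 (h * |δ|) * ‖∑ i ∈ s, (𝐞 (h * f i) : ℂ)‖) := by
          gcongr
          exact hre.trans (by gcongr)
      _ = _ := by ring
  have hnorm := (hasSum_re_fourierChar_sub_one_mul_sum s f δ).norm_le_of_bounded
    (hsummable.hasSum.mul_left _) hterm
  rw [norm_mul, Real.norm_of_nonneg (by positivity), Real.norm_eq_abs] at hnorm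
  rw [div_mul_eq_mul_div, le_div_iff₀ Real.pi_pos]
  refine le_of_mul_le_mul_left (le_of_eq_of_le ?_ hnorm |>.trans_eq ?_) Real.pi_pos <;> ring

theorem abs_sum_sawtooth_le_tsum (s : Finset ι) (f : ι → ℝ) (hδ : 0 < δ) :
    |∑ i ∈ s, sawtooth (f i)| ≤ #s * δ / 2 + 1 / (π * δ) *
      ∑' h : ℕ, min 1 (h * δ) / h ^ 2 * ‖∑ i ∈ s, (𝐞 (h * f i) : ℂ)‖ := by
  set T := ∑' h : ℕ, min 1 (h * δ) / h ^ 2 * ‖∑ i ∈ s, (𝐞 (h * f i) : ℂ)‖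
  have hshift (ε : ℝ) : ∑ i ∈ s,
      (bernoulliFun 2 (Int.fract (f i + ε)) - bernoulliFun 2 (Int.fract (f i))) ≤
        2 * ε * ∑ i ∈ s, sawtooth (f i) + #s * ε ^ 2 := by
    rw [mul_sum, ← nsmul_eq_mul, ← sum_const, ← sum_add_distrib]
    refine sum_le_sum fun i _ ↦ ?_
    linarith [bernoulliFun_two_fract_add_le (f i) ε]
  have hright := (abs_le.1 (abs_sum_bernoulliFun_two_sub_le s f δ)).1.trans (hshift δ)
  have hleft := (abs_le.1 (abs_sum_bernoulliFun_two_sub_le s f (-δ))).1.trans (hshift (-δ))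
  rw [abs_neg, abs_of_pos hδ] at hleft
  rw [abs_of_pos hδ] at hright
  have hscale : #s * δ / 2 + 1 / (π * δ) * T =
      (#s * δ ^ 2 + 2 / π * T) / (2 * δ) := by field_simp
  rw [hscale, le_div_iff₀ (by positivity), ← abs_of_pos (by positivity : 0 < 2 * δ), ← abs_mul,
    abs_le]
  constructor <;> linarith

theorem abs_sum_sawtooth_le_of_norm_sum_le (hδ : 0 < δ) (hP : 0 ≤ P) (hQ : 0 ≤ Q)
    (h : ∀ h : ℕ, 0 < h → ‖∑ i ∈ s, (𝐞 (h * f i) : ℂ)‖ ≤ P * √h + Q / h) :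
    |∑ i ∈ s, sawtooth (f i)| ≤ #s * δ / 2 + 3 * P / √δ + Q := by
  have htsum := tsum_min_mul_div_sq_mul_le hδ hP hQ (fun _ ↦ norm_nonneg _) h
  have hpi := Real.pi_gt_three
  have hP_coeff : 8 * P / (π * √δ) ≤ 3 * P / √δ := by
    rw [div_le_div_iff₀ (by positivity) (by positivity)]
    nlinarith [mul_nonneg hP (Real.sqrt_nonneg δ)]
  have hQ_coeff : π / 6 * Q ≤ Q := mul_le_of_le_one_left hQ (by linarith [Real.pi_le_four])
  calc |∑ i ∈ s, sawtooth (f i)|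
      ≤ #s * δ / 2 + 1 / (π * δ) * (8 * P * √δ + π ^ 2 / 6 * (Q * δ)) := by
        grw [abs_sum_sawtooth_le_tsum s f hδ, htsum]
    _ = #s * δ / 2 + 8 * P / (π * √δ) + π / 6 * Q := by
        have := Real.sq_sqrt hδ.le
        field_simp
        linear_combination 96 * P * this
    _ ≤ #s * δ / 2 + 3 * P / √δ + Q := by gcongr

end ErdosTuran

section SawtoothHyperbola

variable {Y a : ℝ}

-- The smoothing width `δ = Y ^ (1 / 3) / (p + a)` balances the smoothing error `δ (q - p)` against
-- the exponential sums.
theorem abs_sum_Ico_sawtooth_div_le {p q : ℕ} (hY : 0 < Y) (hp : 1 ≤ p + a)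
    (hq : q + a ≤ 2 * (p + a)) :
    |∑ n ∈ Ico p q, sawtooth (Y / (n + a))| ≤
      103 * Y ^ (1 / 3 : ℝ) + 8 * (p + a) ^ 2 / Y := by
  set X : ℝ := p + a with hX
  set z : ℝ := Y ^ (1 / 3 : ℝ) with hz_def
  have hX₀ : 0 < X := by linarith
  have hz : 0 < z := by positivity
  have hz_cube : z ^ 3 = Y := by
    rw [hz_def, ← Real.rpow_mul_natCast hY.le]
    norm_num
  have hcard : (#(Ico p q) : ℝ) ≤ X := by
    rw [Nat.card_Ico]
    rcases le_total p q with h | h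
    · push_cast [h]
      linarith
    · simp [Nat.sub_eq_zero_of_le h, hX₀.le]
  have hexp (h : ℕ) (hh : 0 < h) : ‖∑ n ∈ Ico p q, (𝐞 (h * (Y / (n + a))) : ℂ)‖ ≤
      34 * √(Y / X) * √h + 8 * X ^ 2 / Y / h := by
    have := norm_sum_fourierChar_div_le (Y := h * Y) (by positivity) hp hq
    simp only [← hX, mul_div_assoc] at this ⊢
    rw [Real.sqrt_mul (by positivity)] at this
    refine this.trans_eq ?_
    field_simp
  have hsqrt : √(Y / X) / √(z / X) = z := by
    rw [← Real.sqrt_div (by positivity), ← hz_cube, show z ^ 3 / X / (z / X) = z ^ 2 by field_simp,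
      Real.sqrt_sq hz.le]
  calc |∑ n ∈ Ico p q, sawtooth (Y / (n + a))|
      ≤ #(Ico p q) * (z / X) / 2 + 3 * (34 * √(Y / X)) / √(z / X) + 8 * X ^ 2 / Y :=
        abs_sum_sawtooth_le_of_norm_sum_le (by positivity) (by positivity) (by positivity) hexp
    _ ≤ X * (z / X) / 2 + 102 * (√(Y / X) / √(z / X)) + 8 * X ^ 2 / Y := by
        rw [← mul_assoc, mul_div_assoc _ √(Y / X)]
        gcongr
        norm_num
    _ = z / 2 + 102 * z + 8 * X ^ 2 / Y := by rw [mul_div_cancel₀ _ hX₀.ne', hsqrt]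
    _ ≤ 103 * z + 8 * X ^ 2 / Y := by linarith

theorem abs_sum_Ioc_sawtooth_div_le_of_le {A M : ℕ} (hY : 0 < Y) (ha : a ∈ Set.Icc 0 1)
    (hA : 2 * A ≤ M) (hM : M ≤ 2 * A + 1) (hM₀ : M ≠ 0) :
    |∑ n ∈ Ioc A M, sawtooth (Y / (n + a))| ≤ 103 * Y ^ (1 / 3 : ℝ) + 32 * M ^ 2 / Y := by
  obtain ⟨ha₀, ha₁⟩ := ha
  have hM' : (M : ℝ) ≤ 2 * A + 1 := by exact_mod_cast hM
  have hAM : ((A + 1 : ℕ) + a : ℝ) ≤ 2 * M := by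
    have : (A : ℝ) + 2 ≤ 2 * M := by exact_mod_cast (by lia : A + 2 ≤ 2 * M)
    push_cast
    linarith
  rw [← Ico_add_one_add_one_eq_Ioc]
  calc |∑ n ∈ Ico (A + 1) (M + 1), sawtooth (Y / (n + a))|
      ≤ 103 * Y ^ (1 / 3 : ℝ) + 8 * ((A + 1 : ℕ) + a) ^ 2 / Y :=
        abs_sum_Ico_sawtooth_div_le hY (by push_cast; linarith) (by push_cast; linarith)
    _ ≤ 103 * Y ^ (1 / 3 : ℝ) + 8 * (2 * M) ^ 2 / Y := by gcongr
    _ = 103 * Y ^ (1 / 3 : ℝ) + 32 * M ^ 2 / Y := by ring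

theorem abs_sum_Ioc_sawtooth_div_le (hY : 0 < Y) (ha : a ∈ Set.Icc 0 1) (M : ℕ) :
    |∑ n ∈ Ioc 0 M, sawtooth (Y / (n + a))| ≤
      150 * Y ^ (1 / 3 : ℝ) * (1 + Real.log M) + 48 * M ^ 2 / Y := by
  have hz : 0 ≤ Y ^ (1 / 3 : ℝ) := by positivity
  induction M using Nat.strong_induction_on with
  | _ M ih =>
    rcases (by lia : M = 0 ∨ M = 1 ∨ 2 ≤ M) with rfl | rfl | hM
    · simpa using hz
    · have := abs_sum_Ioc_sawtooth_div_le_of_le (A := 0) (M := 1) hY ha (by simp) le_rfl one_ne_zero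
      refine this.trans ?_
      rw [Nat.cast_one, Real.log_one, add_zero, mul_one]
      gcongr <;> norm_num
    set A := M / 2
    have hA₀ : (0 : ℝ) < A := by exact_mod_cast (by lia : 0 < A)
    have hAM : 2 * (A : ℝ) ≤ M := by exact_mod_cast (by lia : 2 * A ≤ M)
    have hlog : Real.log A + Real.log 2 ≤ Real.log M := by
      rw [← Real.log_mul hA₀.ne' two_ne_zero, mul_comm]
      gcongr
    have hlog_two : 103 ≤ 150 * Real.log 2 := by linarith [Real.log_two_gt_d9]
    rw [← sum_Ioc_consecutive _ A.zero_le (by lia : A ≤ M)]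
    calc |∑ n ∈ Ioc 0 A, sawtooth (Y / (n + a)) + ∑ n ∈ Ioc A M, sawtooth (Y / (n + a))|
        ≤ (150 * Y ^ (1 / 3 : ℝ) * (1 + Real.log A) + 48 * A ^ 2 / Y) +
          (103 * Y ^ (1 / 3 : ℝ) + 32 * M ^ 2 / Y) :=
          (abs_add_le _ _).trans <| add_le_add (ih A (by lia))
            (abs_sum_Ioc_sawtooth_div_le_of_le hY ha (by lia) (by lia) (by lia))
      _ = Y ^ (1 / 3 : ℝ) * (150 * (1 + Real.log A) + 103) +
          (12 * (2 * A) ^ 2 + 32 * M ^ 2) / Y := by ring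
      _ ≤ Y ^ (1 / 3 : ℝ) * (150 * (1 + Real.log M)) + (12 * M ^ 2 + 36 * M ^ 2) / Y := by
          gcongr
          · linarith
          · norm_num
      _ = 150 * Y ^ (1 / 3 : ℝ) * (1 + Real.log M) + 48 * M ^ 2 / Y := by ring

end SawtoothHyperbola

/-! ### Sums over the divisors and over the values of `⌊x / n⌋` -/

theorem sum_Ioc_sum_divisors {M : Type*} [AddCommMonoid M] (K : ℕ) (G : ℕ → ℕ → M) :
    ∑ m ∈ Ioc 0 K, ∑ d ∈ m.divisors, G d m = ∑ d ∈ Ioc 0 K, ∑ k ∈ Ioc 0 (K / d), G d (d * k) := by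
  rw [sum_sigma', sum_sigma']
  refine sum_nbij' (fun p ↦ ⟨p.2, p.1 / p.2⟩) (fun p ↦ ⟨p.1 * p.2, p.1⟩) ?_ ?_ ?_ ?_ ?_
  · rintro ⟨m, d⟩ h
    simp only [mem_sigma, mem_Ioc, Nat.mem_divisors] at h ⊢
    obtain ⟨⟨hm₀, hmK⟩, hdvd, -⟩ := h
    have hd := Nat.pos_of_dvd_of_pos hdvd hm₀
    have hdm := Nat.le_of_dvd hm₀ hdvd
    exact ⟨⟨hd, hdm.trans hmK⟩, Nat.div_pos hdm hd, Nat.div_le_div_right hmK⟩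
  · rintro ⟨d, k⟩ h
    simp only [mem_sigma, mem_Ioc, Nat.mem_divisors] at h ⊢
    obtain ⟨⟨hd, -⟩, hk, hkK⟩ := h
    have hdk := Nat.mul_pos hd hk
    exact ⟨⟨hdk, mul_comm d k ▸ Nat.mul_le_of_le_div d k K hkK⟩, d.dvd_mul_right k, hdk.ne'⟩
  · rintro ⟨m, d⟩ h
    have hdvd := Nat.dvd_of_mem_divisors (mem_sigma.1 h).2
    simp [Nat.mul_div_cancel' hdvd]
  · rintro ⟨d, k⟩ h
    simp [Nat.mul_div_cancel_left k (mem_Ioc.1 (mem_sigma.1 h).1).1]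
  · rintro ⟨m, d⟩ h
    have hdvd := Nat.dvd_of_mem_divisors (mem_sigma.1 h).2
    simp [Nat.mul_div_cancel' hdvd]

theorem sigma_one_div_eq_sum_divisors (m : ℕ) : (σ 1 m : ℝ) / m = ∑ d ∈ m.divisors, (d : ℝ)⁻¹ := by
  rcases eq_or_ne m 0 with rfl | hm
  · simp
  have hm' : (m : ℝ) ≠ 0 := by exact_mod_cast hm
  rw [ArithmeticFunction.sigma_one_apply, ← Nat.sum_div_divisors, Nat.cast_sum, sum_div]
  refine sum_congr rfl fun d hd ↦ ?_
  rw [Nat.cast_div_charZero (Nat.dvd_of_mem_divisors hd), div_div_cancel_left' hm']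

theorem sigma_one_div_le (m : ℕ) : (σ 1 m : ℝ) / m ≤ 1 + Real.log m := by
  calc (σ 1 m : ℝ) / m = ∑ d ∈ m.divisors, (d : ℝ)⁻¹ := sigma_one_div_eq_sum_divisors m
    _ ≤ ∑ d ∈ Icc 1 m, (d : ℝ)⁻¹ :=
        sum_le_sum_of_subset_of_nonneg
          (fun d hd ↦ mem_Icc.2 ⟨Nat.pos_of_mem_divisors hd, Nat.divisor_le hd⟩)
          fun _ _ _ ↦ by positivity
    _ = (harmonic m : ℝ) := by simp [harmonic_eq_sum_Icc]
    _ ≤ 1 + Real.log m := harmonic_le_one_add_log m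

theorem floor_div_eq_of_mem_Ioc {x : ℝ} {m n : ℕ} (hx : 0 ≤ x) (hm : 0 < m)
    (hn : n ∈ Ioc ⌊x / (m + 1)⌋₊ ⌊x / m⌋₊) : ⌊x / n⌋₊ = m := by
  obtain ⟨hn₁, hn₂⟩ := mem_Ioc.1 hn
  have hn₀ : (0 : ℝ) < n := by exact_mod_cast hn₁.pos
  rw [Nat.floor_lt (by positivity), div_lt_comm₀ (by positivity) hn₀] at hn₁
  rw [Nat.le_floor_iff (by positivity), le_div_comm₀ hn₀ (by positivity)] at hn₂
  exact (Nat.floor_eq_iff (by positivity)).2 ⟨hn₂, hn₁⟩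

theorem sum_Ioc_floor_div_eq_sum_nsmul {M : Type*} [AddCommMonoid M] (F : ℕ → M) {x : ℝ}
    (hx : 0 ≤ x) (K : ℕ) :
    ∑ n ∈ Ioc ⌊x / (K + 1)⌋₊ ⌊x⌋₊, F ⌊x / n⌋₊ =
      ∑ m ∈ Ioc 0 K, (⌊x / m⌋₊ - ⌊x / (m + 1)⌋₊) • F m := by
  induction K with
  | zero => simp
  | succ K ih =>
    rw [← Nat.cast_add_one] at ih
    have hle : ⌊x / ((K + 1 : ℕ) + 1)⌋₊ ≤ ⌊x / (K + 1 : ℕ)⌋₊ := by gcongr; simp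
    have hle' : ⌊x / (K + 1 : ℕ)⌋₊ ≤ ⌊x⌋₊ := by
      gcongr
      exact div_le_self hx (by simp)
    rw [sum_Ioc_succ_top K.zero_le, ← ih, ← sum_Ioc_consecutive _ hle hle',
      add_comm _ ((_ : ℕ) • _), ← Nat.card_Ioc, ← sum_const]
    congr 1
    exact sum_congr rfl fun n hn ↦ by rw [floor_div_eq_of_mem_Ioc hx K.succ_pos hn]

theorem natCast_floor_eq_sub_sawtooth {y : ℝ} (hy : 0 ≤ y) :
    (⌊y⌋₊ : ℝ) = y - 1 / 2 - sawtooth y := by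
  rw [natCast_floor_eq_intCast_floor hy, sawtooth, Int.fract]
  ring

theorem sum_Ioc_floor_div_eq_sum_sawtooth (F : ℕ → ℝ) {x : ℝ} (hx : 0 ≤ x) (K : ℕ) :
    ∑ n ∈ Ioc 0 ⌊x⌋₊, F ⌊x / n⌋₊ =
      ∑ n ∈ Ioc 0 ⌊x / (K + 1)⌋₊, F ⌊x / n⌋₊ + x * ∑ m ∈ Ioc 0 K, F m / (m * (m + 1)) -
        ∑ m ∈ Ioc 0 K, F m * sawtooth (x / m) + ∑ m ∈ Ioc 0 K, F m * sawtooth (x / (m + 1)) := by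
  have hle : ⌊x / (K + 1)⌋₊ ≤ ⌊x⌋₊ := by
    gcongr
    exact div_le_self hx (by simp)
  rw [← sum_Ioc_consecutive _ (Nat.zero_le _) hle, sum_Ioc_floor_div_eq_sum_nsmul F hx,
    add_sub_assoc, add_assoc, mul_sum, ← sum_sub_distrib, ← sum_add_distrib]
  congr 1
  refine sum_congr rfl fun m hm ↦ ?_
  have hm₀ : (0 : ℝ) < m := by exact_mod_cast (mem_Ioc.1 hm).1
  have hle : ⌊x / (m + 1)⌋₊ ≤ ⌊x / m⌋₊ := by gcongr; simp
  rw [nsmul_eq_mul, Nat.cast_sub hle, natCast_floor_eq_sub_sawtooth (by positivity),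
    natCast_floor_eq_sub_sawtooth (by positivity)]
  field_simp
  ring

theorem sigma_one_div_sq_mul_le_sub {m : ℕ} (hm : m ≠ 0) :
    (σ 1 m : ℝ) / (m ^ 2 * (m + 1)) ≤
      (2 + Real.log m) / m - (2 + Real.log (m + 1)) / (m + 1) := by
  have hm₀ : (0 : ℝ) < m := by exact_mod_cast hm.pos
  have hlog : m * (Real.log (m + 1) - Real.log m) ≤ 1 := by
    rw [← Real.log_div (by positivity) hm₀.ne', ← le_div_iff₀' hm₀]
    refine (Real.log_le_sub_one_of_pos (by positivity)).trans_eq ?_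
    field_simp
    ring
  calc (σ 1 m : ℝ) / (m ^ 2 * (m + 1)) = (σ 1 m : ℝ) / m / (m * (m + 1)) := by field_simp
    _ ≤ (2 + Real.log m - m * (Real.log (m + 1) - Real.log m)) / (m * (m + 1)) := by
        gcongr
        linarith [sigma_one_div_le m]
    _ = (2 + Real.log m) / m - (2 + Real.log (m + 1)) / (m + 1) := by
        field_simp
        ring

theorem sum_range_sigma_one_div_sq_mul_le {K : ℕ} (hK : K ≠ 0) (N : ℕ) :
    ∑ i ∈ range N, (σ 1 (i + K) : ℝ) / (((i + K : ℕ) : ℝ) ^ 2 * ((i + K : ℕ) + 1)) ≤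
      (2 + Real.log K) / K := by
  have := sum_range_le_of_le_sub (b := fun i ↦ (2 + Real.log (i + K : ℕ)) / (i + K : ℕ))
    (a := fun i ↦ (σ 1 (i + K) : ℝ) / (((i + K : ℕ) : ℝ) ^ 2 * ((i + K : ℕ) + 1)))
    (fun i ↦ by positivity) (fun i ↦ ?_) N
  · simpa using this
  · simpa [add_right_comm] using sigma_one_div_sq_mul_le_sub (m := i + K) (by lia)

theorem summable_sigma_one_div_sq_mul :
    Summable fun m : ℕ ↦ (σ 1 m : ℝ) / (m ^ 2 * (m + 1)) :=
  (summable_nat_add_iff 1).1 <|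
    summable_of_sum_range_le (fun _ ↦ by positivity)
      (sum_range_sigma_one_div_sq_mul_le one_ne_zero)

theorem abs_sum_Ioc_sub_tsum_sigma_one_div_sq_mul_le (K : ℕ) :
    |∑ m ∈ Ioc 0 K, (σ 1 m : ℝ) / (m ^ 2 * (m + 1)) -
        ∑' m : ℕ, (σ 1 m : ℝ) / (m ^ 2 * (m + 1))| ≤
      (2 + Real.log (K + 1)) / (K + 1) := by
  have hsum : ∑ m ∈ range (K + 1), (σ 1 m : ℝ) / (m ^ 2 * (m + 1)) =
      ∑ m ∈ Ioc 0 K, (σ 1 m : ℝ) / (m ^ 2 * (m + 1)) := by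
    rw [range_eq_Ico, sum_eq_sum_Ico_succ_bot K.succ_pos]
    simp [← Ico_add_one_add_one_eq_Ioc]
  rw [← hsum, ← summable_sigma_one_div_sq_mul.sum_add_tsum_nat_add (K + 1), sub_add_cancel_left,
    abs_neg, abs_of_nonneg (tsum_nonneg fun _ ↦ by positivity)]
  simpa using Real.tsum_le_of_sum_range_le (fun _ ↦ by positivity)
    (sum_range_sigma_one_div_sq_mul_le K.succ_ne_zero)

/-! ### The three error terms -/

theorem abs_sum_Ioc_sawtooth_div_mul_add_le {x b : ℝ} (hx : 0 < x) (hb : b ∈ Set.Icc 0 1)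
    {d K : ℕ} (hd : d ∈ Ioc 0 K) :
    |∑ k ∈ Ioc 0 (K / d), sawtooth (x / ((d * k : ℕ) + b))| ≤
      150 * (x / d) ^ (1 / 3 : ℝ) * (1 + Real.log K) + 48 * (K : ℝ) ^ 2 / x / d := by
  obtain ⟨hd₀, hdK⟩ := mem_Ioc.1 hd
  have hd₁ : (1 : ℝ) ≤ d := by exact_mod_cast hd₀
  have hbd : b / d ∈ Set.Icc 0 1 :=
    ⟨div_nonneg hb.1 d.cast_nonneg, div_le_one_of_le₀ (hb.2.trans hd₁) d.cast_nonneg⟩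
  have hlog : Real.log (K / d : ℕ) ≤ Real.log K := by
    have := Nat.div_pos hdK hd₀
    gcongr
    exact K.div_le_self d
  calc |∑ k ∈ Ioc 0 (K / d), sawtooth (x / ((d * k : ℕ) + b))|
      = |∑ k ∈ Ioc 0 (K / d), sawtooth (x / d / (k + b / d))| := by
        congr! 3 with k
        push_cast
        field_simp
    _ ≤ 150 * (x / d) ^ (1 / 3 : ℝ) * (1 + Real.log (K / d : ℕ)) +
          48 * (K / d : ℕ) ^ 2 / (x / d) :=
        abs_sum_Ioc_sawtooth_div_le (by positivity) hbd _
    _ ≤ 150 * (x / d) ^ (1 / 3 : ℝ) * (1 + Real.log K) + 48 * (K / d : ℝ) ^ 2 / (x / d) := by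
        gcongr
        exact Nat.cast_div_le
    _ = 150 * (x / d) ^ (1 / 3 : ℝ) * (1 + Real.log K) + 48 * (K : ℝ) ^ 2 / x / d := by
        field_simp

theorem inv_mul_abs_sum_Ioc_sawtooth_div_mul_add_le {x b : ℝ} (hx : 0 < x)
    (hb : b ∈ Set.Icc 0 1) {d K : ℕ} (hd : d ∈ Ioc 0 K) :
    (d : ℝ)⁻¹ * |∑ k ∈ Ioc 0 (K / d), sawtooth (x / ((d * k : ℕ) + b))| ≤
      1 / (d : ℝ) ^ (4 / 3 : ℝ) *
        (150 * x ^ (1 / 3 : ℝ) * (1 + Real.log K) + 48 * (K : ℝ) ^ 2 / x) := by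
  have hd₁ : (1 : ℝ) ≤ d := by exact_mod_cast (mem_Ioc.1 hd).1
  have hd₀ : (0 : ℝ) < d := by linarith
  have hpow : (d : ℝ)⁻¹ * (x / d) ^ (1 / 3 : ℝ) = 1 / (d : ℝ) ^ (4 / 3 : ℝ) * x ^ (1 / 3 : ℝ) := by
    rw [Real.div_rpow hx.le hd₀.le, show (4 / 3 : ℝ) = 1 + 1 / 3 by norm_num,
      Real.rpow_add hd₀, Real.rpow_one]
    field_simp
  have hsq : 1 / (d : ℝ) ^ 2 ≤ 1 / (d : ℝ) ^ (4 / 3 : ℝ) := by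
    rw [← Real.rpow_two]
    gcongr
    norm_num
  calc (d : ℝ)⁻¹ * |∑ k ∈ Ioc 0 (K / d), sawtooth (x / ((d * k : ℕ) + b))|
      ≤ (d : ℝ)⁻¹ * (150 * (x / d) ^ (1 / 3 : ℝ) * (1 + Real.log K) + 48 * K ^ 2 / x / d) := by
        gcongr
        exact abs_sum_Ioc_sawtooth_div_mul_add_le hx hb hd
    _ = (d : ℝ)⁻¹ * (x / d) ^ (1 / 3 : ℝ) * (150 * (1 + Real.log K)) +
          1 / d ^ 2 * (48 * K ^ 2 / x) := by ring
    _ ≤ 1 / d ^ (4 / 3 : ℝ) * x ^ (1 / 3 : ℝ) * (150 * (1 + Real.log K)) +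
          1 / d ^ (4 / 3 : ℝ) * (48 * K ^ 2 / x) := by
        rw [hpow]
        gcongr
    _ = _ := by ring

theorem abs_sum_sigma_one_div_mul_sawtooth_le {x b : ℝ} (hx : 0 < x) (hb : b ∈ Set.Icc 0 1)
    (K : ℕ) :
    |∑ m ∈ Ioc 0 K, (σ 1 m : ℝ) / m * sawtooth (x / (m + b))| ≤
      (∑' d : ℕ, 1 / (d : ℝ) ^ (4 / 3 : ℝ)) *
        (150 * x ^ (1 / 3 : ℝ) * (1 + Real.log K) + 48 * (K : ℝ) ^ 2 / x) := by
  calc |∑ m ∈ Ioc 0 K, (σ 1 m : ℝ) / m * sawtooth (x / (m + b))|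
      = |∑ d ∈ Ioc 0 K, (d : ℝ)⁻¹ * ∑ k ∈ Ioc 0 (K / d), sawtooth (x / ((d * k : ℕ) + b))| := by
        simp_rw [sigma_one_div_eq_sum_divisors, sum_mul, mul_sum]
        rw [sum_Ioc_sum_divisors K fun d m ↦ (d : ℝ)⁻¹ * sawtooth (x / (m + b))]
    _ ≤ ∑ d ∈ Ioc 0 K, (d : ℝ)⁻¹ * |∑ k ∈ Ioc 0 (K / d), sawtooth (x / ((d * k : ℕ) + b))| := by
        refine (abs_sum_le_sum_abs _ _).trans_eq (sum_congr rfl fun d _ ↦ ?_)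
        rw [abs_mul, abs_of_nonneg (by positivity)]
    _ ≤ ∑ d ∈ Ioc 0 K, 1 / (d : ℝ) ^ (4 / 3 : ℝ) *
          (150 * x ^ (1 / 3 : ℝ) * (1 + Real.log K) + 48 * (K : ℝ) ^ 2 / x) :=
        sum_le_sum fun d hd ↦ inv_mul_abs_sum_Ioc_sawtooth_div_mul_add_le hx hb hd
    _ ≤ (∑' d : ℕ, 1 / (d : ℝ) ^ (4 / 3 : ℝ)) *
          (150 * x ^ (1 / 3 : ℝ) * (1 + Real.log K) + 48 * (K : ℝ) ^ 2 / x) := by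
        rw [← sum_mul]
        gcongr
        exact (Real.summable_one_div_nat_rpow.2 (by norm_num)).sum_le_tsum _
          fun _ _ ↦ by positivity

theorem sq_floor_rpow_div_le {x : ℝ} (hx : 0 < x) :
    (⌊x ^ (2 / 3 : ℝ)⌋₊ : ℝ) ^ 2 / x ≤ x ^ (1 / 3 : ℝ) := by
  calc (⌊x ^ (2 / 3 : ℝ)⌋₊ : ℝ) ^ 2 / x ≤ (x ^ (2 / 3 : ℝ)) ^ 2 / x := by
        gcongr
        exact Nat.floor_le (by positivity)
    _ = x ^ (1 / 3 : ℝ) := by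
        rw [← Real.rpow_mul_natCast hx.le, ← Real.rpow_sub_one hx.ne']
        norm_num

theorem div_floor_rpow_add_one_le {x : ℝ} (hx : 0 < x) :
    x / (⌊x ^ (2 / 3 : ℝ)⌋₊ + 1) ≤ x ^ (1 / 3 : ℝ) := by
  calc x / (⌊x ^ (2 / 3 : ℝ)⌋₊ + 1) ≤ x / x ^ (2 / 3 : ℝ) := by
        gcongr
        exact (Nat.lt_floor_add_one _).le
    _ = x ^ (1 / 3 : ℝ) := by
        rw [← Real.rpow_one_sub' hx.le (by norm_num)]
        norm_num

theorem floor_rpow_le_self {x : ℝ} (hx : 1 ≤ x) : (⌊x ^ (2 / 3 : ℝ)⌋₊ : ℝ) ≤ x :=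
  (Nat.floor_le (by positivity)).trans (Real.rpow_le_self_of_one_le hx (by norm_num))

theorem isBigO_of_abs_le_rpow_mul_add_log {f : ℝ → ℝ} (C : ℝ)
    (h : ∀ x, 1 ≤ x → |f x| ≤ C * (x ^ (1 / 3 : ℝ) * (1 + Real.log x))) :
    f =O[atTop] fun x ↦ x ^ (1 / 3 : ℝ) * Real.log x := by
  have hlog : (fun x : ℝ ↦ 1 + Real.log x) =O[atTop] Real.log :=
    (Real.isLittleO_const_log_atTop (c := 1)).isBigO.add (Asymptotics.isBigO_refl _ _)
  refine (Asymptotics.IsBigO.of_bound C ?_).trans ((Asymptotics.isBigO_refl _ _).mul hlog)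
  filter_upwards [eventually_ge_atTop 1] with x hx
  have := Real.log_nonneg hx
  rw [Real.norm_eq_abs, Real.norm_of_nonneg (by positivity)]
  exact h x hx

theorem isBigO_sum_sigma_one_div_floor_div :
    (fun x : ℝ ↦ ∑ n ∈ Ioc 0 ⌊x / (⌊x ^ (2 / 3 : ℝ)⌋₊ + 1)⌋₊, (σ 1 ⌊x / n⌋₊ : ℝ) / ⌊x / n⌋₊)
      =O[atTop] fun x ↦ x ^ (1 / 3 : ℝ) * Real.log x := by
  refine isBigO_of_abs_le_rpow_mul_add_log 1 fun x hx ↦ ?_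
  have hx₀ : 0 < x := by linarith
  have hlog_nonneg := Real.log_nonneg hx
  have hlog (n : ℕ) : Real.log ⌊x / n⌋₊ ≤ Real.log x := by
    rcases Nat.eq_zero_or_pos ⌊x / n⌋₊ with h | h
    · simpa [h] using hlog_nonneg
    · gcongr
      exact (Nat.floor_le (by positivity)).trans (div_nat_le_self_of_nonnneg hx₀.le n)
  rw [abs_of_nonneg (sum_nonneg fun _ _ ↦ by positivity), one_mul]
  calc ∑ n ∈ Ioc 0 ⌊x / (⌊x ^ (2 / 3 : ℝ)⌋₊ + 1)⌋₊, (σ 1 ⌊x / n⌋₊ : ℝ) / ⌊x / n⌋₊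
      ≤ ∑ n ∈ Ioc 0 ⌊x / (⌊x ^ (2 / 3 : ℝ)⌋₊ + 1)⌋₊, (1 + Real.log x) :=
        sum_le_sum fun n _ ↦ (sigma_one_div_le _).trans (add_le_add_right (hlog n) 1)
    _ = ⌊x / (⌊x ^ (2 / 3 : ℝ)⌋₊ + 1)⌋₊ * (1 + Real.log x) := by
        rw [sum_const, Nat.card_Ioc, Nat.sub_zero, nsmul_eq_mul]
    _ ≤ x ^ (1 / 3 : ℝ) * (1 + Real.log x) := by
        gcongr
        exact (Nat.floor_le (by positivity)).trans (div_floor_rpow_add_one_le hx₀)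

theorem isBigO_mul_sum_sub_tsum_sigma_one_div_sq_mul :
    (fun x : ℝ ↦ x * (∑ m ∈ Ioc 0 ⌊x ^ (2 / 3 : ℝ)⌋₊, (σ 1 m : ℝ) / (m ^ 2 * (m + 1)) -
        ∑' m : ℕ, (σ 1 m : ℝ) / (m ^ 2 * (m + 1))))
      =O[atTop] fun x ↦ x ^ (1 / 3 : ℝ) * Real.log x := by
  refine isBigO_of_abs_le_rpow_mul_add_log 3 fun x hx ↦ ?_
  have hx₀ : 0 < x := by linarith
  have hlog : Real.log (⌊x ^ (2 / 3 : ℝ)⌋₊ + 1) ≤ 1 + Real.log x := by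
    calc Real.log (⌊x ^ (2 / 3 : ℝ)⌋₊ + 1) ≤ Real.log (2 * x) := by
          gcongr
          linarith [floor_rpow_le_self hx]
      _ ≤ 1 + Real.log x := by
          rw [Real.log_mul two_ne_zero hx₀.ne']
          linarith [Real.log_two_lt_d9]
  have hlog_nonneg := Real.log_nonneg hx
  rw [abs_mul, abs_of_pos hx₀]
  calc x * _ ≤ x * ((2 + Real.log (⌊x ^ (2 / 3 : ℝ)⌋₊ + 1)) / (⌊x ^ (2 / 3 : ℝ)⌋₊ + 1)) := by
        gcongr
        exact abs_sum_Ioc_sub_tsum_sigma_one_div_sq_mul_le _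
    _ ≤ x * ((2 + (1 + Real.log x)) / (⌊x ^ (2 / 3 : ℝ)⌋₊ + 1)) := by gcongr
    _ = x / (⌊x ^ (2 / 3 : ℝ)⌋₊ + 1) * (2 + (1 + Real.log x)) := by ring
    _ ≤ x ^ (1 / 3 : ℝ) * (2 + (1 + Real.log x)) := by
        gcongr
        exact div_floor_rpow_add_one_le hx₀
    _ ≤ x ^ (1 / 3 : ℝ) * (3 * (1 + Real.log x)) := by
        gcongr
        linarith
    _ = 3 * (x ^ (1 / 3 : ℝ) * (1 + Real.log x)) := by ring

theorem isBigO_sum_sigma_one_div_mul_sawtooth {b : ℝ} (hb : b ∈ Set.Icc 0 1) :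
    (fun x : ℝ ↦ ∑ m ∈ Ioc 0 ⌊x ^ (2 / 3 : ℝ)⌋₊, (σ 1 m : ℝ) / m * sawtooth (x / (m + b)))
      =O[atTop] fun x ↦ x ^ (1 / 3 : ℝ) * Real.log x := by
  set S : ℝ := ∑' d : ℕ, 1 / (d : ℝ) ^ (4 / 3 : ℝ)
  refine isBigO_of_abs_le_rpow_mul_add_log (198 * S) fun x hx ↦ ?_
  have hx₀ : 0 < x := by linarith
  have hlog_nonneg := Real.log_nonneg hx
  have hlog : Real.log ⌊x ^ (2 / 3 : ℝ)⌋₊ ≤ Real.log x := by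
    have : 0 < ⌊x ^ (2 / 3 : ℝ)⌋₊ := Nat.floor_pos.2 (Real.one_le_rpow hx (by norm_num))
    gcongr
    exact floor_rpow_le_self hx
  have hsq : (⌊x ^ (2 / 3 : ℝ)⌋₊ : ℝ) ^ 2 / x ≤ x ^ (1 / 3 : ℝ) * (1 + Real.log x) :=
    (sq_floor_rpow_div_le hx₀).trans (le_mul_of_one_le_right (by positivity) (by linarith))
  calc |∑ m ∈ Ioc 0 ⌊x ^ (2 / 3 : ℝ)⌋₊, (σ 1 m : ℝ) / m * sawtooth (x / (m + b))|
      ≤ S * (150 * x ^ (1 / 3 : ℝ) * (1 + Real.log ⌊x ^ (2 / 3 : ℝ)⌋₊) +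
          48 * ⌊x ^ (2 / 3 : ℝ)⌋₊ ^ 2 / x) := abs_sum_sigma_one_div_mul_sawtooth_le hx₀ hb _
    _ ≤ S * (150 * x ^ (1 / 3 : ℝ) * (1 + Real.log x) +
          48 * (x ^ (1 / 3 : ℝ) * (1 + Real.log x))) := by
        rw [mul_div_assoc]
        gcongr
    _ = 198 * S * (x ^ (1 / 3 : ℝ) * (1 + Real.log x)) := by ring

/-- `∑_{n ≤ x} σ(⌊x/n⌋)/⌊x/n⌋ = x ∑_{m ≥ 1} σ(m)/(m²(m+1)) + O(x^{1/3} log x)`,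
where `σ(n) = ∑_{d ∣ n} d` is the sum-of-divisors function. -/
theorem sum_sigma_ratio_floor_div :
    (fun x : ℝ =>
        (∑ n ∈ Finset.Icc 1 ⌊x⌋₊,
          ((ArithmeticFunction.sigma 1) ⌊x / (n : ℝ)⌋₊ : ℝ) / (⌊x / (n : ℝ)⌋₊ : ℝ)) -
        x * ∑' m : ℕ, ((ArithmeticFunction.sigma 1) m : ℝ) / (m ^ 2 * (m + 1)))
    =O[atTop] fun x : ℝ => x ^ ((1 : ℝ) / 3) * Real.log x := by
  have hhead := isBigO_sum_sigma_one_div_floor_div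
  have htail := isBigO_mul_sum_sub_tsum_sigma_one_div_sq_mul
  have hsaw₀ := isBigO_sum_sigma_one_div_mul_sawtooth (b := 0) (by simp)
  have hsaw₁ := isBigO_sum_sigma_one_div_mul_sawtooth (b := 1) (by simp)
  refine (((hhead.add htail).sub hsaw₀).add hsaw₁).congr' ?_ .rfl
  filter_upwards [eventually_ge_atTop 0] with x hx
  have hIcc : Icc 1 ⌊x⌋₊ = Ioc 0 ⌊x⌋₊ := Icc_add_one_left_eq_Ioc 0 _
  have hsigma (m : ℕ) : (σ 1 m : ℝ) / (m ^ 2 * (m + 1)) = (σ 1 m : ℝ) / m / (m * (m + 1)) := by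
    rw [div_div, sq, mul_assoc]
  rw [hIcc, sum_Ioc_floor_div_eq_sum_sawtooth (fun m ↦ (σ 1 m : ℝ) / m) hx ⌊x ^ (2 / 3 : ℝ)⌋₊]
  simp only [add_zero, ← hsigma]
  ring
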